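/- Let A = diag(a_1, …, a_n) be a diagonal matrix with a_1 ≥ a_2 ≥ … ≥ a_n ≥ 0, let B = [b_{ij}] be an n×n Hermitian positive semidefinite matrix, and assume Tr(AB) > 0. Let p be the smallest index j with a_j b_{jj} > 0. Then for every ε > 0 and every positive integer k there exists N (depending on A, B, ε, k) such that Tr(S_{m,k}(A,B)) ≥ (1 − ε) · b_{pp}^k · a_p^m · binomial(m+k, k) for all m > N. -/

import Mathlib

/-!
Write `P` for the coordinate projection onto the indices `j ≥ p` with `a j = a p`.  The word sums
satisfy `S (m+1) (k+1) = S m (k+1) * A + S (m+1) k * B`.  As `A` is diagonal, every entry of column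
`j`, divided by `(a p)^m`, obeys a scalar recursion `x (m+1) = α x m + y (m+1)` with
`α = a j / a p`, driven by an entry `y` of `S m k * B`.  If `y m ~ L * (m+k).choose k`, then
`x m / (m+k+1).choose (k+1)` tends to `L` when `α = 1` (`tendsto_accumulate_one`) and to `0` when
`α < 1` (`tendsto_accumulate_lt_one`).  Induction on `k` gives (`tendsto_S_apply`)
`S m k / ((a p)^m (m+k).choose k) → P (B P)^k` on the columns `j ≥ p`.

The indices `j < p` are harmless: there `a j ≥ a p > 0` forces `b_jj = 0`, so positivity of `B` kills
its whole row and column `j`, and with it column `j` of `S m k` for `k ≥ 1`.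

Finally `Tr (P (B P)^k) = Tr ((P B P)^k) ≥ ((P B P)^k)_pp ≥ b_pp^k` for `k ≥ 1`, the last step by
Jensen's inequality for the spectral measure of the `p`-th coordinate vector (`le_trace_limit`).
As `b_pp > 0`, the limit strictly exceeds `(1 - ε) b_pp^k`, so the claim holds for large `m`; the
trace is real because `S m k` is Hermitian.
-/

open Polynomial Matrix ComplexOrder

/-- `S p q A B` is the sum of all `(p+q).choose p` words in `A, B` with `p` letters `A` and
`q` letters `B`; equivalently, the coefficient of `t^q` in `(A + t B)^(p+q)`. -/
noncomputable def S {n : ℕ} (p q : ℕ) (A B : Matrix (Fin n) (Fin n) ℂ) :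
    Matrix (Fin n) (Fin n) ℂ :=
  ((Polynomial.C A + Polynomial.X * Polynomial.C B) ^ (p + q)).coeff q

open Filter Topology

/-! ### Word sums as coefficients of `(A + t B)^N` -/

theorem coeff_pencil_succ {n : ℕ} (A B : Matrix (Fin n) (Fin n) ℂ) (N k : ℕ) :
    ((C A + X * C B) ^ (N + 1)).coeff (k + 1) =
      ((C A + X * C B) ^ N).coeff (k + 1) * A + ((C A + X * C B) ^ N).coeff k * B := by
  rw [pow_succ, mul_add, coeff_add, coeff_mul_C, ← mul_assoc, coeff_mul_C, coeff_mul_X]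

theorem coeff_pencil_succ' {n : ℕ} (A B : Matrix (Fin n) (Fin n) ℂ) (N k : ℕ) :
    ((C A + X * C B) ^ (N + 1)).coeff (k + 1) =
      A * ((C A + X * C B) ^ N).coeff (k + 1) + B * ((C A + X * C B) ^ N).coeff k := by
  rw [pow_succ', add_mul, coeff_add, coeff_C_mul, mul_assoc, coeff_X_mul, coeff_C_mul]

theorem coeff_pencil_zero {n : ℕ} (A B : Matrix (Fin n) (Fin n) ℂ) (N : ℕ) :
    ((C A + X * C B) ^ N).coeff 0 = A ^ N := by
  induction N with
  | zero => simp
  | succ N ih => rw [pow_succ, mul_coeff_zero, ih]; simp [pow_succ]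

theorem coeff_pencil_eq_zero {n : ℕ} (A B : Matrix (Fin n) (Fin n) ℂ) (N : ℕ) :
    ∀ k, N < k → ((C A + X * C B) ^ N).coeff k = 0 := by
  induction N with
  | zero => intro k hk; simp [coeff_one, hk.ne']
  | succ N ih =>
    intro k hk
    obtain ⟨k, rfl⟩ : ∃ l, k = l + 1 := ⟨k - 1, by omega⟩
    rw [coeff_pencil_succ, ih _ (by omega), ih _ (by omega)]; simp

theorem S_zero_right {n : ℕ} (A B : Matrix (Fin n) (Fin n) ℂ) (m : ℕ) :
    S m 0 A B = A ^ m := coeff_pencil_zero A B _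

theorem S_zero_succ {n : ℕ} (A B : Matrix (Fin n) (Fin n) ℂ) (k : ℕ) :
    S 0 (k + 1) A B = S 0 k A B * B := by
  unfold S
  rw [← add_assoc, coeff_pencil_succ, coeff_pencil_eq_zero _ _ _ _ (by omega)]; simp

theorem S_succ_succ {n : ℕ} (A B : Matrix (Fin n) (Fin n) ℂ) (m k : ℕ) :
    S (m + 1) (k + 1) A B = S m (k + 1) A B * A + S (m + 1) k A B * B := by
  unfold S
  rw [← add_assoc, coeff_pencil_succ, show m + 1 + k = m + (k + 1) by omega]

theorem coeff_pencil_isHermitian {n : ℕ} {A B : Matrix (Fin n) (Fin n) ℂ} (hA : A.IsHermitian)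
    (hB : B.IsHermitian) (N : ℕ) : ∀ k, (((C A + X * C B) ^ N).coeff k).IsHermitian := by
  induction N with
  | zero =>
    intro k
    rcases k with _ | k
    · simp
    · simp [coeff_one]
  | succ N ih =>
    intro k
    rcases k with _ | k
    · rw [coeff_pencil_zero]; exact hA.pow _
    · unfold Matrix.IsHermitian
      conv_lhs => rw [coeff_pencil_succ]
      rw [conjTranspose_add, conjTranspose_mul, conjTranspose_mul, hA.eq, hB.eq, (ih _).eq,
        (ih _).eq, ← coeff_pencil_succ']

/-- If column `j` of `B` vanishes and `A` is diagonal, then so does column `j` of every word sum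
containing at least one letter `B`. -/
theorem S_apply_eq_zero {n : ℕ} (d : Fin n → ℂ) (B : Matrix (Fin n) (Fin n) ℂ) (j : Fin n)
    (hj : ∀ i, B i j = 0) (k m : ℕ) (i : Fin n) :
    S m (k + 1) (Matrix.diagonal d) B i j = 0 := by
  induction m with
  | zero => rw [S_zero_succ]; simp [Matrix.mul_apply, hj]
  | succ m ih => rw [S_succ_succ, Matrix.add_apply, Matrix.mul_diagonal, ih]; simp [Matrix.mul_apply, hj]

/-! ### Scalar linear recursions with binomial growth -/

theorem sum_range_choose_add (k m : ℕ) :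
    ∑ l ∈ Finset.range (m + 1), (l + k).choose k = (m + (k + 1)).choose (k + 1) := by
  induction m with
  | zero => simp
  | succ m ih =>
    rw [Finset.sum_range_succ, ih, show m + 1 + (k + 1) = (m + (k + 1)) + 1 by omega,
      Nat.choose_succ_succ, show m + 1 + k = m + (k + 1) by omega, add_comm]

theorem choose_pos_real (m k : ℕ) : (0 : ℝ) < ((m + k).choose k : ℝ) := by
  exact_mod_cast Nat.choose_pos (by omega)

/-- Undamped accumulation (`α = 1`): partial sums of a sequence asymptotic to
`L * (m + k).choose k` are asymptotic to `L * (m + k + 1).choose (k + 1)`. -/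
theorem tendsto_accumulate_one (k : ℕ) (x y : ℕ → ℂ) (L : ℂ) (h0 : x 0 = y 0)
    (hx : ∀ m, x (m + 1) = x m + y (m + 1))
    (hy : Tendsto (fun m => y m / ((m + k).choose k : ℝ)) atTop (𝓝 L)) :
    Tendsto (fun m => x m / ((m + (k + 1)).choose (k + 1) : ℝ)) atTop (𝓝 L) := by
  have hxs : ∀ m, x m = ∑ l ∈ Finset.range (m + 1), y l := by
    intro m
    induction m with
    | zero => simp [h0]
    | succ m ih => rw [hx, ih, ← Finset.sum_range_succ]
  have hcs : ∀ m : ℕ, ∑ l ∈ Finset.range (m + 1), ((l + k).choose k : ℝ) =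
      ((m + (k + 1)).choose (k + 1) : ℝ) := fun m => by
    exact_mod_cast sum_range_choose_add k m
  have hne : ∀ m k : ℕ, (((m + k).choose k : ℝ) : ℂ) ≠ 0 := fun m k => by
    exact_mod_cast (choose_pos_real m k).ne'
  have ho : (fun l => y l - L * ((l + k).choose k : ℝ)) =o[atTop]
      (fun l => ((l + k).choose k : ℝ)) := by
    rw [← Asymptotics.isLittleO_norm_right]
    have : (fun l : ℕ => ‖((l + k).choose k : ℝ)‖) = fun l => ‖(((l + k).choose k : ℝ) : ℂ)‖ := by
      ext l; simp
    rw [this, Asymptotics.isLittleO_norm_right,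
      Asymptotics.isLittleO_iff_tendsto (fun l hl => absurd hl (hne l k))]
    have := hy.sub_const L
    rw [sub_self] at this
    refine this.congr fun l => ?_
    have := hne l k
    field_simp
  have hdiv : Tendsto (fun N => ∑ l ∈ Finset.range N, ((l + k).choose k : ℝ)) atTop atTop := by
    refine tendsto_atTop_mono (f := fun N : ℕ => (N : ℝ)) (fun N => ?_) tendsto_natCast_atTop_atTop
    calc (N : ℝ) = ∑ l ∈ Finset.range N, (1 : ℝ) := by simp
      _ ≤ _ := Finset.sum_le_sum fun l _ => by
        exact_mod_cast Nat.choose_pos (by omega : k ≤ l + k)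
  have h := (ho.sum_range (fun l => (choose_pos_real l k).le) hdiv).comp_tendsto
    (tendsto_add_atTop_nat 1)
  have h2 : Tendsto (fun m => ‖x m / ((m + (k + 1)).choose (k + 1) : ℝ) - L‖) atTop (𝓝 0) := by
    refine h.norm_left.tendsto_div_nhds_zero.congr fun m => ?_
    simp only [Function.comp]
    rw [Finset.sum_sub_distrib, ← Finset.mul_sum, ← hxs, hcs]
    have e : ∑ l ∈ Finset.range (m + 1), (((l + k).choose k : ℝ) : ℂ) =
      (((m + (k + 1)).choose (k + 1) : ℝ) : ℂ) := by
        rw [← hcs]; push_cast; rfl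
    rw [e]
    have hn := hne m (k + 1)
    have : x m / ((m + (k + 1)).choose (k + 1) : ℝ) - L =
      (x m - L * ((m + (k + 1)).choose (k + 1) : ℝ)) / ((m + (k + 1)).choose (k + 1) : ℝ) := by
      field_simp
    rw [this, norm_div, Complex.norm_real, Real.norm_of_nonneg (choose_pos_real m (k + 1)).le]
  exact tendsto_iff_norm_sub_tendsto_zero.2 h2

/-- Damped accumulation (`α < 1`): the geometric damping keeps `x m` of order
`(m + k).choose k`, which is negligible against `(m + k + 1).choose (k + 1)`. -/
theorem tendsto_accumulate_lt_one (k : ℕ) (α : ℝ) (hα0 : 0 ≤ α) (hα : α < 1) (x y : ℕ → ℂ) (L : ℂ)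
    (hx : ∀ m, x (m + 1) = α * x m + y (m + 1))
    (hy : Tendsto (fun m => y m / ((m + k).choose k : ℝ)) atTop (𝓝 L)) :
    Tendsto (fun m => x m / ((m + (k + 1)).choose (k + 1) : ℝ)) atTop (𝓝 0) := by
  obtain ⟨M, hM⟩ := hy.norm.bddAbove_range
  have hyM : ∀ m, ‖y m‖ ≤ M * ((m + k).choose k : ℝ) := by
    intro m
    have h1 : ‖y m / ((m + k).choose k : ℝ)‖ ≤ M := hM ⟨m, rfl⟩
    rwa [norm_div, Complex.norm_real, Real.norm_of_nonneg (choose_pos_real m k).le,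
      div_le_iff₀ (choose_pos_real m k)] at h1
  -- `K` is chosen so that `α * K + M ≤ K`, which makes the bound below inductive.
  set K := max ‖x 0‖ (M / (1 - α)) with hK
  have hK0 : 0 ≤ K := (norm_nonneg _).trans (le_max_left _ _)
  have hKM : α * K + M ≤ K := by
    have : M / (1 - α) ≤ K := le_max_right _ _
    rw [div_le_iff₀ (by linarith)] at this
    linarith
  have hxK : ∀ m, ‖x m‖ ≤ K * ((m + k).choose k : ℝ) := by
    intro m
    induction m with
    | zero => simp [hK]
    | succ m ih =>
      have hmono : ((m + k).choose k : ℝ) ≤ ((m + 1 + k).choose k : ℝ) := by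
        exact_mod_cast Nat.choose_le_choose k (by omega)
      calc ‖x (m + 1)‖ ≤ α * ‖x m‖ + ‖y (m + 1)‖ := by
            rw [hx]
            refine (norm_add_le _ _).trans ?_
            rw [norm_mul, Complex.norm_real, Real.norm_of_nonneg hα0]
        _ ≤ α * (K * ((m + 1 + k).choose k : ℝ)) + M * ((m + 1 + k).choose k : ℝ) := by
            gcongr
            · exact ih.trans (by gcongr)
            · exact hyM _
        _ = (α * K + M) * ((m + 1 + k).choose k : ℝ) := by ring
        _ ≤ _ := by gcongr
  have hratio : ∀ m : ℕ, ((m + k).choose k : ℝ) * (m + (k + 1) : ℝ) =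
      ((m + (k + 1)).choose (k + 1) : ℝ) * (k + 1 : ℝ) := by
    intro m
    have := Nat.add_one_mul_choose_eq (m + k) k
    have h2 : ((m + k + 1 : ℕ) : ℝ) * ((m + k).choose k : ℝ) =
      ((m + k + 1).choose (k + 1) : ℝ) * ((k + 1 : ℕ) : ℝ) := by exact_mod_cast this
    push_cast at h2
    rw [← add_assoc, ← add_assoc]
    linarith
  have hlim : Tendsto (fun m : ℕ => K * (k + 1) / ((m : ℝ) + (k + 1))) atTop (𝓝 0) :=
    tendsto_const_nhds.div_atTop (tendsto_atTop_add_const_right _ _ tendsto_natCast_atTop_atTop)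
  refine squeeze_zero_norm (fun m => ?_) hlim
  have hc := choose_pos_real m (k + 1)
  rw [norm_div, Complex.norm_real, Real.norm_of_nonneg hc.le, div_le_div_iff₀ hc (by positivity)]
  calc ‖x m‖ * ((m : ℝ) + (k + 1)) ≤ K * ((m + k).choose k : ℝ) * ((m : ℝ) + (k + 1)) := by
        gcongr; exact hxK m
    _ = K * (k + 1) * ((m + (k + 1)).choose (k + 1) : ℝ) := by
        rw [mul_assoc, hratio]; ring

/-! ### Leading-order asymptotics of the word sums -/

/-- Coordinate projection onto the indices `j ≥ p` with `a j = a p`. -/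
noncomputable def topProj {n : ℕ} (a : Fin n → ℝ) (p : Fin n) : Matrix (Fin n) (Fin n) ℂ :=
  Matrix.diagonal fun j => if p ≤ j ∧ a j = a p then 1 else 0

/-- Leading-order asymptotics: `S m k A B ~ (a p)^m (m + k).choose k • P (B P)^k` entrywise, on the
columns `j ≥ p`, where `P = topProj a p`.  Rows of `B` with index below `p` are assumed to vanish,
so only these columns enter the recursion in `k`. -/
theorem tendsto_S_apply {n : ℕ} (a : Fin n → ℝ) (ha0 : ∀ i, 0 ≤ a i) (p : Fin n) (hp : 0 < a p)
    (hle : ∀ j, p ≤ j → a j ≤ a p) (B : Matrix (Fin n) (Fin n) ℂ)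
    (hB : ∀ j, j < p → ∀ l, B j l = 0) (k : ℕ) : ∀ i j, p ≤ j →
    Tendsto (fun m => S m k (Matrix.diagonal fun i => (a i : ℂ)) B i j / (a p : ℂ) ^ m /
      ((m + k).choose k : ℝ)) atTop (𝓝 ((topProj a p * (B * topProj a p) ^ k) i j)) := by
  have hpc : (a p : ℂ) ≠ 0 := by exact_mod_cast hp.ne'
  have hr0 : ∀ j, 0 ≤ a j / a p := fun j => div_nonneg (ha0 j) hp.le
  induction k with
  | zero =>
    intro i j hj
    simp only [S_zero_right, Matrix.diagonal_pow, Matrix.diagonal_apply, topProj, pow_zero,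
      mul_one, Nat.choose_zero_right, Nat.cast_one, Complex.ofReal_one, div_one,
      Pi.pow_apply]
    by_cases hij : i = j
    · subst hij
      simp only [if_true]
      by_cases h : a i = a p
      · simp [h, hpc, hj]
      · have hlt : a i / a p < 1 := (div_lt_one hp).2 (lt_of_le_of_ne (hle i hj) h)
        have := (Complex.continuous_ofReal.tendsto 0).comp
          (tendsto_pow_atTop_nhds_zero_of_lt_one (hr0 i) hlt)
        simpa [h, Function.comp_def, div_pow] using this
    · simp [hij]
  | succ k ih =>
    intro i j hj
    set A : Matrix (Fin n) (Fin n) ℂ := Matrix.diagonal fun i => (a i : ℂ) with hA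
    set Q := topProj a p * (B * topProj a p) ^ k with hQ
    have hy : Tendsto (fun m => (S m k A B * B) i j / (a p : ℂ) ^ m / ((m + k).choose k : ℝ))
        atTop (𝓝 ((Q * B) i j)) := by
      simp only [Matrix.mul_apply, Finset.sum_div]
      refine tendsto_finsetSum _ fun l _ => ?_
      by_cases hl : p ≤ l
      · refine ((ih i l hl).mul_const (B l j)).congr fun m => ?_
        ring
      · simp [hB l (not_le.1 hl)]
    have hrec : ∀ m, S (m + 1) (k + 1) A B i j / (a p : ℂ) ^ (m + 1) =
        ((a j / a p : ℝ) : ℂ) * (S m (k + 1) A B i j / (a p : ℂ) ^ m) +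
          (S (m + 1) k A B * B) i j / (a p : ℂ) ^ (m + 1) := by
      intro m
      rw [S_succ_succ, Matrix.add_apply, hA, Matrix.mul_diagonal, ← hA, add_div]
      push_cast
      congr 1
      rw [pow_succ]
      field_simp
    have hlim : (topProj a p * (B * topProj a p) ^ (k + 1)) i j =
        if a j = a p then (Q * B) i j else 0 := by
      rw [pow_succ, ← mul_assoc, ← hQ, ← mul_assoc, topProj, Matrix.mul_diagonal]
      simp [hj]
    rw [hlim]
    split_ifs with h
    · refine tendsto_accumulate_one k (fun m => S m (k + 1) A B i j / (a p : ℂ) ^ m) _ _ ?_ ?_ hy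
      · simp [S_zero_succ]
      · intro m
        simpa [h, hpc] using hrec m
    · exact tendsto_accumulate_lt_one k (a j / a p) (hr0 j)
        ((div_lt_one hp).2 (lt_of_le_of_ne (hle j hj) h))
        (fun m => S m (k + 1) A B i j / (a p : ℂ) ^ m) _ _ hrec hy

/-! ### Lower bound for the limit -/

/-- Jensen's inequality for `t ↦ t ^ k` and the spectral weights of a coordinate vector. -/
theorem diag_pow_le {n : ℕ} {D : Matrix (Fin n) (Fin n) ℂ} (hD : D.PosSemidef) (k : ℕ)
    (p : Fin n) : (D p p).re ^ k ≤ ((D ^ k) p p).re := by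
  set U : Matrix (Fin n) (Fin n) ℂ := (hD.1.eigenvectorUnitary).1 with hU
  have hpow : ∀ k : ℕ, ((D ^ k) p p).re = ∑ j, ‖U p j‖ ^ 2 * hD.1.eigenvalues j ^ k := by
    intro k
    have h : D ^ k = U * (Matrix.diagonal (RCLike.ofReal ∘ hD.1.eigenvalues)) ^ k * star U := by
      conv_lhs => rw [hD.1.spectral_theorem]
      rw [← map_pow, Unitary.conjStarAlgAut_apply]
    rw [h, Matrix.diagonal_pow, Matrix.mul_apply, Complex.re_sum]
    refine Finset.sum_congr rfl fun j _ => ?_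
    rw [Matrix.mul_diagonal, Matrix.star_apply, Pi.pow_apply, Function.comp_apply, mul_right_comm]
    have hs : U p j * star (U p j) = ((‖U p j‖ ^ 2 : ℝ) : ℂ) := by
      rw [← Complex.normSq_eq_norm_sq]; exact Complex.mul_conj _
    have hr : ((RCLike.ofReal (hD.1.eigenvalues j) : ℂ)) ^ k =
        ((hD.1.eigenvalues j ^ k : ℝ) : ℂ) := by push_cast; rfl
    rw [hs, hr, ← Complex.ofReal_mul, Complex.ofReal_re]
  have h0 := hpow 0
  have h1 := hpow 1
  simp only [pow_zero, mul_one, Matrix.one_apply_eq, Complex.one_re, pow_one] at h0 h1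
  rw [h1, hpow]
  exact Real.pow_arith_mean_le_arith_mean_pow _ _ _ (fun _ _ => by positivity) h0.symm
    (fun j _ => hD.eigenvalues_nonneg j) k

/-- The limit constant `Tr (P (B P)^k)` equals `Tr ((P B P)^k)`, whose `p`-th diagonal entry alone
is already at least `b_pp ^ k`. -/
theorem le_trace_limit {n : ℕ} (a : Fin n → ℝ) (p : Fin n) {B : Matrix (Fin n) (Fin n) ℂ}
    (hB : B.PosSemidef) (k : ℕ) :
    (B p p).re ^ (k + 1) ≤ ((topProj a p * (B * topProj a p) ^ (k + 1)).trace).re := by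
  set P := topProj a p with hP
  have hPH : Pᴴ = P := by
    rw [hP, topProj, Matrix.diagonal_conjTranspose]
    congr 1
    ext j
    simp only [Pi.star_apply]
    split_ifs <;> simp
  have hPP : P * P = P := by
    rw [hP, topProj, Matrix.diagonal_mul_diagonal]
    congr 1
    ext j
    split_ifs <;> simp
  have hD : (P * B * P).PosSemidef := by
    have := hB.conjTranspose_mul_mul_same P
    rwa [hPH] at this
  have hpow : ∀ k : ℕ, P * (B * P) ^ (k + 1) = (P * B * P) ^ (k + 1) := by
    intro k
    induction k with
    | zero => simp [mul_assoc]
    | succ k ih =>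
      rw [pow_succ, ← mul_assoc P, ih, pow_succ (P * B * P) (k + 1), pow_succ (P * B * P) k,
        mul_assoc ((P * B * P) ^ k)]
      have : P * B * P * (B * P) = P * B * P * (P * B * P) := by
        simp only [← mul_assoc]
        rw [mul_assoc (P * B) P P, hPP]
      rw [this]
      exact (mul_assoc _ _ _).symm
  have hDp : (P * B * P) p p = B p p := by
    rw [hP, topProj, Matrix.mul_diagonal, Matrix.diagonal_mul]
    simp
  rw [hpow, ← hDp, Matrix.trace, Complex.re_sum]
  refine (diag_pow_le hD (k + 1) p).trans ?_
  exact Finset.single_le_sum (f := fun i => (((P * B * P) ^ (k + 1)) i i).re)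
    (fun i _ => (Complex.le_def.1 (hD.pow (k + 1)).diag_nonneg).1) (Finset.mem_univ p)

/-! ### Asymptotic lower bound for the trace -/

/-- Let `A = diag(a)` with `a₁ ≥ … ≥ aₙ ≥ 0`, let `B` be Hermitian positive semidefinite with
`Tr(AB) > 0`, and let `p` be the smallest index with `a_p b_pp > 0`.  Then for every `ε > 0`
and `k ≥ 1` there is `N` with
`Tr(S_{m,k}(A,B)) ≥ (1-ε) b_pp^k a_p^m (m+k choose k)` for all `m > N`. -/
theorem stmt_2 {n : ℕ} (a : Fin n → ℝ) (ha : ∀ i j : Fin n, i ≤ j → a j ≤ a i)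
    (ha0 : ∀ i, 0 ≤ a i)
    (A : Matrix (Fin n) (Fin n) ℂ) (hA : A = Matrix.diagonal fun i => (a i : ℂ))
    (B : Matrix (Fin n) (Fin n) ℂ) (hB : B.PosSemidef)
    (hAB : 0 < (A * B).trace)
    (p : Fin n) (hp : 0 < a p * (B p p).re)
    (hpmin : ∀ j : Fin n, j < p → ¬ (0 < a j * (B j j).re)) :
    ∀ ε : ℝ, 0 < ε → ∀ k : ℕ, 1 ≤ k → ∃ N : ℕ, ∀ m : ℕ, N < m →
      ((1 - ε) * (B p p).re ^ k * a p ^ m * ((m + k).choose k) : ℂ) ≤ (S m k A B).trace := by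
  subst hA
  intro ε hε k hk
  obtain ⟨k, rfl⟩ : ∃ l, k = l + 1 := ⟨k - 1, by omega⟩
  have hap : 0 < a p := lt_of_le_of_ne (ha0 p) fun h => by simp [← h] at hp
  have hbp : 0 < (B p p).re := pos_of_mul_pos_right hp (ha0 p)
  have hBdiag : ∀ j, 0 ≤ (B j j).re ∧ 0 = (B j j).im := fun j => Complex.le_def.1 hB.diag_nonneg
  -- A positive semidefinite matrix with a vanishing diagonal entry has a vanishing column there;
  -- for `j < p` the diagonal entry vanishes because `a j ≥ a p > 0`.
  have hcol : ∀ j, j < p → ∀ i, B i j = 0 := by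
    intro j hj i
    have haj : 0 < a j := hap.trans_le (ha j p hj.le)
    have hre : (B j j).re = 0 := by
      by_contra h
      exact hpmin j hj (mul_pos haj (lt_of_le_of_ne (hBdiag j).1 (Ne.symm h)))
    have hjj : B j j = 0 := Complex.ext hre (hBdiag j).2.symm
    have h := (hB.dotProduct_mulVec_zero_iff (Pi.single j 1)).1 (by simp [hjj])
    simpa using congrFun h i
  have hrow : ∀ j, j < p → ∀ l, B j l = 0 := by
    intro j hj l
    rw [← hB.1.apply j l, hcol j hj l, star_zero]
  set A : Matrix (Fin n) (Fin n) ℂ := Matrix.diagonal fun i => (a i : ℂ) with hA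
  have hlim : Tendsto (fun m => (S m (k + 1) A B).trace / (a p : ℂ) ^ m /
      ((m + (k + 1)).choose (k + 1) : ℝ)) atTop
      (𝓝 (topProj a p * (B * topProj a p) ^ (k + 1)).trace) := by
    simp only [Matrix.trace, Finset.sum_div, Matrix.diag_apply]
    refine tendsto_finsetSum _ fun i _ => ?_
    by_cases hi : p ≤ i
    · exact tendsto_S_apply a ha0 p hap (ha p) B hrow (k + 1) i i hi
    · have h0 : (topProj a p * (B * topProj a p) ^ (k + 1)) i i = 0 := by
        rw [topProj, Matrix.diagonal_mul]
        simp [hi]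
      simp [h0, hA, S_apply_eq_zero _ B i (hcol i (not_le.1 hi))]
  have hre := (Complex.continuous_re.tendsto _).comp hlim
  have hlt : (1 - ε) * (B p p).re ^ (k + 1) <
      ((topProj a p * (B * topProj a p) ^ (k + 1)).trace).re :=
    lt_of_lt_of_le (by nlinarith [pow_pos hbp (k + 1)]) (le_trace_limit a p hB k)
  obtain ⟨N, hN⟩ := eventually_atTop.1 (hre.eventually (lt_mem_nhds hlt))
  refine ⟨N, fun m hm => ?_⟩
  have hm := hN m hm.le
  have hAH : A.IsHermitian := by
    rw [hA, Matrix.isHermitian_diagonal_iff]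
    intro i
    simp [IsSelfAdjoint]
  have him : ((S m (k + 1) A B).trace).im = 0 := by
    have h : (S m (k + 1) A B).IsHermitian := coeff_pencil_isHermitian hAH hB.1 _ _
    have h2 := Matrix.trace_conjTranspose (S m (k + 1) A B)
    rw [h.eq] at h2
    exact Complex.conj_eq_iff_im.1 h2.symm
  simp only [Function.comp, ← Complex.ofReal_pow, Complex.div_ofReal_re] at hm
  have hc := choose_pos_real m (k + 1)
  rw [lt_div_iff₀ hc, lt_div_iff₀ (pow_pos hap m)] at hm
  have e : ((1 - ε) * (B p p).re ^ (k + 1) * a p ^ m * ((m + (k + 1)).choose (k + 1)) : ℂ) =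
      (((1 - ε) * (B p p).re ^ (k + 1) * a p ^ m * ((m + (k + 1)).choose (k + 1)) : ℝ) : ℂ) := by
    push_cast; ring
  rw [e, Complex.le_def]
  refine ⟨?_, ?_⟩
  · rw [Complex.ofReal_re]
    linarith [hm]
  · rw [Complex.ofReal_im, him]
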